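/- Let X be a one-dimensional Peano continuum and ε > 0. Then there exists a finite subgraph Y ⊆ X and a surjective continuous map f : X → Y such that d(x, f(x)) < ε for all x ∈ X. -/

import Mathlib

open Set

/-- Covering dimension at most `n`. -/
def CovDimLE (X : Type*) [TopologicalSpace X] (n : ℕ) : Prop :=
  ∀ U : Set (Set X), U.Finite → (∀ u ∈ U, IsOpen u) → ⋃₀ U = Set.univ →
    ∃ V : Set (Set X), V.Finite ∧ (∀ v ∈ V, IsOpen v) ∧ ⋃₀ V = Set.univ ∧
      (∀ v ∈ V, ∃ u ∈ U, v ⊆ u) ∧ ∀ x : X, {v ∈ V | x ∈ v}.ncard ≤ n + 1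

/-- A subset is a finite (topological) graph: finitely many vertices and finitely
many edges, each edge an arc with endpoints among the vertices, interiors of edges
pairwise disjoint and disjoint from the vertex set. -/
def IsFiniteTopGraph {X : Type*} [TopologicalSpace X] (Y : Set X) : Prop :=
  ∃ (V : Finset X) (n : ℕ) (e : Fin n → C(unitInterval, X)),
    (∀ i, Function.Injective (e i)) ∧
    (∀ i, e i 0 ∈ V ∧ e i 1 ∈ V) ∧
    (∀ i, ∀ t : unitInterval, e i t ∈ V → t = 0 ∨ t = 1) ∧
    (∀ i j, i ≠ j → ∀ x, x ∈ Set.range (e i) → x ∈ Set.range (e j) → x ∈ V) ∧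
    Y = ↑V ∪ ⋃ i, Set.range (e i)

open Filter Topology


theorem pn_chain {X : Type*} [MetricSpace X] {C : Set X} (hC : IsPreconnected C) {κ : ℝ}
    (hκ : 0 < κ) {x y : X} (hx : x ∈ C) (hy : y ∈ C) :
    ∃ (L : ℕ) (c : ℕ → X), c 0 = x ∧ (∀ n, L ≤ n → c n = y) ∧ (∀ n, c n ∈ C) ∧
      ∀ n, dist (c n) (c (n + 1)) < κ := by
  refine hC.induction₂' (fun x y => ∃ (L : ℕ) (c : ℕ → X), c 0 = x ∧ (∀ n, L ≤ n → c n = y) ∧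
    (∀ n, c n ∈ C) ∧ ∀ n, dist (c n) (c (n + 1)) < κ) ?_ ?_ hx hy
  · intro x hx
    have h2 : ∀ a b, a ∈ C → b ∈ C → dist a b < κ → ∃ (L : ℕ) (c : ℕ → X), c 0 = a ∧
        (∀ n, L ≤ n → c n = b) ∧ (∀ n, c n ∈ C) ∧ ∀ n, dist (c n) (c (n + 1)) < κ := by
      intro a b ha hb hab
      refine ⟨1, fun n => if n = 0 then a else b, by simp, ?_, ?_, ?_⟩
      · intro n hn
        have : n ≠ 0 := by omega
        simp [this]
      · intro n
        dsimp only
        split_ifs <;> assumption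
      · intro n
        by_cases h : n = 0 <;> simp [h, hab, hκ]
    filter_upwards [self_mem_nhdsWithin,
      mem_nhdsWithin_of_mem_nhds (Metric.ball_mem_nhds x hκ)] with y hy hyx
    have hyx' : dist y x < κ := hyx
    exact ⟨h2 x y hx hy (by rwa [dist_comm]), h2 y x hy hx hyx'⟩
  · rintro x y z - - - ⟨L, c, h0, h1, h2, h3⟩ ⟨L', c', h0', h1', h2', h3'⟩
    refine ⟨L + L', fun n => if n ≤ L then c n else c' (n - L), by simp [h0], ?_, ?_, ?_⟩
    · intro n hn
      by_cases h : n ≤ L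
      · have e1 : L' = 0 := by omega
        have e2 : n = L := by omega
        subst e1 e2
        have := h1' 0 le_rfl
        simp [h1 n le_rfl, ← this, h0']
      · simp only [h, if_false]
        exact h1' _ (by omega)
    · intro n
      dsimp only
      split_ifs
      · exact h2 _
      · exact h2' _
    · intro n
      rcases lt_trichotomy n L with h | h | h
      · simp only [h.le, if_true, Nat.succ_le_of_lt h]
        exact h3 n
      · subst h
        simp only [le_refl, if_true, show ¬ (n + 1 ≤ n) by omega, if_false,
          show n + 1 - n = 1 by omega]
        have := h3' 0
        rwa [h0', ← h1 n le_rfl] at this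
      · simp only [show ¬ n ≤ L by omega, show ¬ (n + 1 ≤ L) by omega, if_false]
        have := h3' (n - L)
        rwa [show n - L + 1 = n + 1 - L by omega] at this

theorem pn_ulc {X : Type*} [MetricSpace X] [CompactSpace X] [LocallyConnectedSpace X] {η : ℝ}
    (hη : 0 < η) : ∃ δ > 0, ∀ x y : X, dist x y < δ →
      ∃ C : Set X, IsPreconnected C ∧ x ∈ C ∧ y ∈ C ∧ C ⊆ Metric.ball x η := by
  have h : ∀ x : X, ∃ C ⊆ Metric.ball x (η / 2), IsOpen C ∧ x ∈ C ∧ IsConnected C := fun x =>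
    locallyConnectedSpace_iff_subsets_isOpen_isConnected.1 inferInstance x _
      (Metric.ball_mem_nhds x (half_pos hη))
  choose C hC1 hC2 hC3 hC4 using h
  obtain ⟨δ, hδ, H⟩ := lebesgue_number_lemma_of_metric (s := (univ : Set X)) (c := C) isCompact_univ
    hC2 (fun x _ => mem_iUnion.2 ⟨x, hC3 x⟩)
  refine ⟨δ, hδ, fun x y hxy => ?_⟩
  obtain ⟨i, hi⟩ := H x (mem_univ _)
  have hx : x ∈ C i := hi (Metric.mem_ball_self hδ)
  refine ⟨C i, (hC4 i).isPreconnected, hx, hi (by rwa [Metric.mem_ball, dist_comm]), ?_⟩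
  intro z hz
  have h1 := hC1 i hz
  have h2 := hC1 i hx
  rw [Metric.mem_ball] at *
  linarith [dist_triangle_right z x i]

/-- State: `p.1` is the number of steps, `p.2` the chain of points. -/
def PnInv {X : Type*} [MetricSpace X] (a b : X) (δ : ℝ) (p : ℕ × (ℕ → X)) : Prop :=
  1 ≤ p.1 ∧ p.2 0 = a ∧ (∀ i, p.1 ≤ i → p.2 i = b) ∧ ∀ i, dist (p.2 i) (p.2 (i + 1)) < δ

theorem pn_step {X : Type*} [MetricSpace X] {δ η κ : ℝ} (hη : 0 < η) (hκ : 0 < κ)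
    (H : ∀ x y : X, dist x y < δ →
      ∃ C : Set X, IsPreconnected C ∧ x ∈ C ∧ y ∈ C ∧ C ⊆ Metric.ball x η) {a b : X}
    (p : ℕ × (ℕ → X)) (hp : PnInv a b δ p) :
    ∃ q, PnInv a b κ q ∧ ∃ L, 1 ≤ L ∧ q.1 = p.1 * L ∧ ∀ m, dist (p.2 (m / L)) (q.2 m) < η := by
  obtain ⟨k, x⟩ := p
  obtain ⟨hk, h0, h1, h2⟩ := hp
  dsimp only at *
  have hc : ∀ i, ∃ (M : ℕ) (c : ℕ → X), c 0 = x i ∧ (∀ n, M ≤ n → c n = x (i + 1)) ∧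
      (∀ n, dist (x i) (c n) < η) ∧ (∀ n, dist (c n) (c (n + 1)) < κ) ∧ (k ≤ i → M = 0) := by
    intro i
    by_cases hi : k ≤ i
    · refine ⟨0, fun _ => b, (h1 i hi).symm, fun _ _ => (h1 (i + 1) (by omega)).symm, ?_, ?_,
        fun _ => rfl⟩
      · intro n
        simp [h1 i hi, hη]
      · simp [hκ]
    · obtain ⟨C, hC, hxC, hyC, hsub⟩ := H _ _ (h2 i)
      obtain ⟨M, c, c0, c1, c2, c3⟩ := pn_chain hC hκ hxC hyC
      refine ⟨M, c, c0, c1, fun n => ?_, c3, fun h => absurd h hi⟩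
      have := hsub (c2 n)
      rwa [Metric.mem_ball, dist_comm] at this
  choose M c c0 c1 c2 c3 c4 using hc
  obtain ⟨L, hL1, hL⟩ : ∃ L, 1 ≤ L ∧ ∀ i, M i ≤ L := by
    refine ⟨∑ i ∈ Finset.range k, M i + 1, by omega, fun i => ?_⟩
    by_cases hi : k ≤ i
    · simp [c4 i hi]
    · have := Finset.single_le_sum (f := M) (fun _ _ => Nat.zero_le _)
        (Finset.mem_range.2 (not_le.1 hi))
      omega
  refine ⟨(k * L, fun m => c (m / L) (m % L)), ⟨?_, ?_, ?_, ?_⟩, L, hL1, rfl, ?_⟩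
  · exact Nat.mul_pos hk hL1
  · simp [c0, h0]
  · intro m hm
    dsimp only at hm ⊢
    have : k ≤ m / L := (Nat.le_div_iff_mul_le hL1).2 hm
    rw [c1 _ _ (by rw [c4 _ this]; omega)]
    exact h1 _ (by omega)
  · intro m
    dsimp only
    have e : m = L * (m / L) + m % L := (Nat.div_add_mod m L).symm
    have hlt : m % L < L := Nat.mod_lt _ hL1
    generalize m / L = u at *
    generalize m % L = v at *
    by_cases hv : v + 1 < L
    · have e1 : (m + 1) / L = u := by
        rw [e, add_assoc, Nat.mul_add_div hL1, Nat.div_eq_of_lt hv, add_zero]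
      have e2 : (m + 1) % L = v + 1 := by
        rw [e, add_assoc, Nat.mul_add_mod, Nat.mod_eq_of_lt hv]
      rw [e1, e2]
      exact c3 _ _
    · have hv' : v + 1 = L := by omega
      have e0 : m + 1 = L * (u + 1) := by rw [e, mul_add, add_assoc, hv', mul_one]
      have e1 : (m + 1) / L = u + 1 := by rw [e0, Nat.mul_div_cancel_left _ hL1]
      have e2 : (m + 1) % L = 0 := by rw [e0, Nat.mul_mod_right]
      rw [e1, e2, c0, ← c1 u (v + 1) (by rw [hv']; exact hL u)]
      exact c3 _ _
  · intro m
    exact c2 _ _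

theorem pn_path {X : Type*} [MetricSpace X] [CompactSpace X] [LocallyConnectedSpace X] {η : ℝ}
    (hη : 0 < η) : ∃ δ > 0, ∀ a b : X, dist a b < δ →
      ∃ f : ℝ → X, Continuous f ∧ f 0 = a ∧ f 1 = b ∧ ∀ t, dist a (f t) < η := by
  have hpos : ∀ n : ℕ, 0 < η / 2 / 2 / 2 ^ n := fun n => by positivity
  have hδ : ∀ n : ℕ, ∃ δ > 0, δ ≤ η / 2 / 2 / 2 ^ n ∧ ∀ x y : X, dist x y < δ →
      ∃ C : Set X, IsPreconnected C ∧ x ∈ C ∧ y ∈ C ∧ C ⊆ Metric.ball x (η / 2 / 2 / 2 ^ n) := by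
    intro n
    obtain ⟨δ, h1, h2⟩ := pn_ulc (X := X) (hpos n)
    exact ⟨min δ _, lt_min h1 (hpos n), min_le_right _ _,
      fun x y h => h2 x y (lt_of_lt_of_le h (min_le_left _ _))⟩
  choose δ δpos δle hδ using hδ
  refine ⟨δ 0, δpos 0, fun a b hab => ?_⟩
  have base : PnInv a b (δ 0) (1, fun n => if n = 0 then a else b) := by
    refine ⟨le_rfl, by simp, ?_, ?_⟩
    · intro i hi
      have : i ≠ 0 := by dsimp only at hi; omega
      simp [this]
    · intro i
      by_cases h : i = 0 <;> simp [h, hab, δpos 0]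
  have step := fun n (p : {p // PnInv a b (δ n) p}) =>
    pn_step (hpos n) (δpos (n + 1)) (hδ n) p.1 p.2
  let s : ∀ n, {p // PnInv a b (δ n) p} := fun n => Nat.rec (motive := fun n => {p // PnInv a b (δ n) p})
    ⟨_, base⟩ (fun n p => ⟨(step n p).choose, (step n p).choose_spec.1⟩) n
  have hs : ∀ n, ∃ L, 1 ≤ L ∧ (s (n + 1)).1.1 = (s n).1.1 * L ∧
      ∀ m, dist ((s n).1.2 (m / L)) ((s (n + 1)).1.2 m) < η / 2 / 2 / 2 ^ n :=
    fun n => (step n (s n)).choose_spec.2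
  have hs0 : (s 0).1 = (1, fun n => if n = 0 then a else b) := rfl
  clear_value s
  let F : ℕ → ℝ → X := fun n t => (s n).1.2 ⌊t * (s n).1.1⌋₊
  have hF : ∀ t n, dist (F n t) (F (n + 1) t) ≤ η / 2 / 2 / 2 ^ n := by
    intro t n
    obtain ⟨L, hL, e, h⟩ := hs n
    have := h ⌊t * (s (n + 1)).1.1⌋₊
    rw [← Nat.floor_div_natCast, e] at this
    have hL' : (L : ℝ) ≠ 0 := by positivity
    rw [Nat.cast_mul, ← mul_assoc, mul_div_assoc, div_self hL', mul_one, mul_assoc,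
      ← Nat.cast_mul, ← e] at this
    exact this.le
  choose f hf using fun t => cauchySeq_tendsto_of_complete
    (cauchySeq_of_le_geometric_two (hF t))
  have hdist : ∀ t n, dist (F n t) (f t) ≤ η / 2 / 2 ^ n := fun t n =>
    dist_le_of_le_geometric_two_of_tendsto (hF t) (hf t) n
  refine ⟨f, ?_, ?_, ?_, ?_⟩
  · rw [Metric.continuous_iff]
    intro t e he
    obtain ⟨n, hn⟩ : ∃ n : ℕ, η / 2 ^ n * 2 < e := by
      have : Tendsto (fun n : ℕ => η / 2 ^ n * 2) atTop (𝓝 (0 * 2)) := by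
        refine Tendsto.mul_const _ ?_
        simpa [div_eq_mul_inv] using
          (tendsto_pow_atTop_nhds_zero_of_lt_one (r := (2 : ℝ)⁻¹) (by norm_num) (by norm_num)).const_mul η
      rw [zero_mul] at this
      exact (this.eventually (gt_mem_nhds he)).exists
    have hk : 0 < ((s n).1.1 : ℝ) := by exact_mod_cast (s n).2.1
    have hj := (s n).2.2.2.2
    have key : ∀ u v : ℝ, u ≤ v → v - u < 1 / (s n).1.1 → dist (F n u) (F n v) < δ n := by
      intro u v huv h
      rw [lt_div_iff₀ hk] at h
      have h1 : ⌊u * (s n).1.1⌋₊ ≤ ⌊v * (s n).1.1⌋₊ := Nat.floor_le_floor (by gcongr)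
      have h2 : ⌊v * (s n).1.1⌋₊ ≤ ⌊u * (s n).1.1⌋₊ + 1 := by
        rw [← Nat.lt_add_one_iff]
        apply (Nat.floor_lt' (by omega)).2
        have := Nat.lt_floor_add_one (u * (s n).1.1)
        push_cast
        linarith
      have h3 : ⌊v * (s n).1.1⌋₊ = ⌊u * (s n).1.1⌋₊ ∨ ⌊v * (s n).1.1⌋₊ = ⌊u * (s n).1.1⌋₊ + 1 := by
        omega
      rcases h3 with h3 | h3
      · simp only [F, h3, dist_self]
        exact δpos n
      · simp only [F, h3]
        exact hj _
    refine ⟨1 / (s n).1.1, by positivity, fun u hu => ?_⟩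
    rw [Real.dist_eq, abs_lt] at hu
    have k2 : dist (F n u) (F n t) < δ n := by
      rcases le_total u t with h | h
      · exact key u t h (by linarith)
      · rw [dist_comm]
        exact key t u h (by linarith)
    have a1 := hdist u n
    have a2 := hdist t n
    have a3 := δle n
    have a4 := dist_triangle4 (f u) (F n u) (F n t) (f t)
    rw [dist_comm (f u) (F n u)] at a4
    have e1 : η / 2 / 2 ^ n = (η / 2 ^ n) / 2 := by ring
    have e2 : η / 2 / 2 / 2 ^ n = (η / 2 ^ n) / 4 := by ring
    have : 0 < η / 2 ^ n := by positivity
    rw [e1] at a1 a2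
    rw [e2] at a3
    linarith
  · refine tendsto_nhds_unique (hf 0) ?_
    have : (fun n => F n 0) = fun _ => a := by
      funext n
      simp [F, (s n).2.2.1]
    rw [this]
    exact tendsto_const_nhds
  · refine tendsto_nhds_unique (hf 1) ?_
    have : (fun n => F n 1) = fun _ => b := by
      funext n
      simp [F, (s n).2.2.2.1]
    rw [this]
    exact tendsto_const_nhds
  · intro t
    have h1 := hdist t 0
    have h2 : dist a (F 0 t) < η / 2 := by
      have h3 : F 0 t = a ∨ F 0 t = b := by
        simp only [F, hs0]
        split_ifs <;> simp
      have h4 := δle 0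
      simp only [pow_zero, div_one] at h4
      rcases h3 with h3 | h3 <;> rw [h3]
      · simp [hη]
      · linarith
    have := dist_triangle a (F 0 t) (f t)
    simp only [pow_zero, div_one] at h1
    linarith

theorem pn_joined {X : Type*} [MetricSpace X] [CompactSpace X] [LocallyConnectedSpace X]
    {W : Set X} (hW : IsOpen W) (hc : IsPreconnected W) {x y : X} (hx : x ∈ W) (hy : y ∈ W) :
    JoinedIn W x y := by
  refine hc.induction₂ (fun x y => JoinedIn W x y) ?_ (fun _ _ _ _ _ _ h1 h2 => h1.trans h2)
    (fun _ _ _ _ h => h.symm) hx hy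
  intro x hx
  obtain ⟨η, hη, hsub⟩ := Metric.isOpen_iff.1 hW x hx
  obtain ⟨δ, hδ, H⟩ := pn_path (X := X) hη
  filter_upwards [mem_nhdsWithin_of_mem_nhds (Metric.ball_mem_nhds x hδ)] with y hy
  obtain ⟨f, fc, f0, f1, hf⟩ := H x y (by rwa [dist_comm])
  refine ⟨⟨⟨fun t => f t, by fun_prop⟩, by simp [f0], by simp [f1]⟩, fun t => hsub ?_⟩
  rw [Metric.mem_ball, dist_comm]
  exact hf _


theorem pa_zorn {X : Type*} [MetricSpace X] (γ : ℝ → X) (hγ : Continuous γ) :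
    ∃ K : Set ℝ, K ⊆ Icc 0 1 ∧ IsClosed K ∧ (0 : ℝ) ∈ K ∧ (1 : ℝ) ∈ K ∧
      (∀ s ∈ K, ∀ t ∈ K, s < t → (∀ x ∈ K, ¬ (s < x ∧ x < t)) → γ s = γ t) ∧
      (∀ s ∈ K, ∀ t ∈ K, s < t → γ s = γ t → ∀ x ∈ K, ¬ (s < x ∧ x < t)) := by
  let S : Set (Set ℝ) := {K | K ⊆ Icc 0 1 ∧ IsClosed K ∧ (0 : ℝ) ∈ K ∧ (1 : ℝ) ∈ K ∧
      (∀ s ∈ K, ∀ t ∈ K, s < t → (∀ x ∈ K, ¬ (s < x ∧ x < t)) → γ s = γ t)}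
  have hS : Icc (0 : ℝ) 1 ∈ S := by
    refine ⟨Subset.rfl, isClosed_Icc, by simp, by simp, ?_⟩
    intro s hs t ht hst h
    exact absurd ⟨by linarith, by linarith⟩
      (h ((s + t) / 2) ⟨by linarith [hs.1, ht.1], by linarith [hs.2, ht.2]⟩)
  obtain ⟨K, -, hK⟩ := zorn_superset_nonempty S (by
    intro c hc hch hne
    refine ⟨⋂₀ c, ⟨?_, ?_, ?_, ?_, ?_⟩, fun s hs => sInter_subset_of_mem hs⟩
    · obtain ⟨k, hk⟩ := hne
      exact (sInter_subset_of_mem hk).trans (hc hk).1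
    · exact isClosed_sInter fun k hk => (hc hk).2.1
    · exact mem_sInter.2 fun k hk => (hc hk).2.2.1
    · exact mem_sInter.2 fun k hk => (hc hk).2.2.2.1
    · intro s hs t ht hst hgap
      by_contra hne'
      -- nearby points have distinct images
      obtain ⟨d, hd, hdd⟩ : ∃ d > 0, ∀ s' t' : ℝ, |s' - s| < d → |t' - t| < d → γ s' ≠ γ t' := by
        have hD : 0 < dist (γ s) (γ t) := dist_pos.2 hne'
        obtain ⟨d1, hd1, h1⟩ := Metric.continuous_iff.1 hγ s _ (half_pos hD)
        obtain ⟨d2, hd2, h2⟩ := Metric.continuous_iff.1 hγ t _ (half_pos hD)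
        refine ⟨min d1 d2, lt_min hd1 hd2, fun s' t' hs' ht' he => ?_⟩
        have a1 := h1 s' (lt_of_lt_of_le hs' (min_le_left _ _))
        have a2 := h2 t' (lt_of_lt_of_le ht' (min_le_right _ _))
        rw [he] at a1
        have := dist_triangle_left (γ s) (γ t) (γ t')
        linarith
      obtain ⟨r, hr, hrd, hrst⟩ : ∃ r > 0, r < d ∧ s + r < t - r :=
        ⟨min (d / 2) ((t - s) / 4), lt_min (by linarith) (by linarith),
          by linarith [min_le_left (d / 2) ((t - s) / 4)],
          by linarith [min_le_right (d / 2) ((t - s) / 4)]⟩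
      obtain ⟨k, hk, hke⟩ : ∃ k ∈ c, ∀ x ∈ k, ¬ (s + r ≤ x ∧ x ≤ t - r) := by
        by_contra hcon
        push Not at hcon
        have : (⋂₀ ((fun k => k ∩ Icc (s + r) (t - r)) '' c)).Nonempty := by
          have hne' : Nonempty ((fun k => k ∩ Icc (s + r) (t - r)) '' c) := (hne.image _).to_subtype
          refine IsCompact.nonempty_sInter_of_directed_nonempty_isCompact_isClosed ?_ ?_ ?_ ?_
          · rintro _ ⟨k1, hk1, rfl⟩ _ ⟨k2, hk2, rfl⟩
            rcases hch.total hk1 hk2 with h | h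
            · exact ⟨_, ⟨k1, hk1, rfl⟩, Subset.rfl, inter_subset_inter_left _ h⟩
            · exact ⟨_, ⟨k2, hk2, rfl⟩, inter_subset_inter_left _ h, Subset.rfl⟩
          · rintro _ ⟨k1, hk1, rfl⟩
            obtain ⟨x, hx, hx'⟩ := hcon k1 hk1
            exact ⟨x, hx, hx'⟩
          · rintro _ ⟨k1, hk1, rfl⟩
            exact isCompact_Icc.inter_left (hc hk1).2.1
          · rintro _ ⟨k1, hk1, rfl⟩
            exact (hc hk1).2.1.inter isClosed_Icc
        obtain ⟨x, hx⟩ := this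
        have hx1 : ∀ k ∈ c, x ∈ k ∧ x ∈ Icc (s + r) (t - r) := fun k hk => hx _ ⟨k, hk, rfl⟩
        obtain ⟨k, hk⟩ := hne
        have h2 := (hx1 k hk).2
        exact hgap x (mem_sInter.2 fun k hk => (hx1 k hk).1) ⟨by linarith [h2.1], by linarith [h2.2]⟩
      have hkc := (hc hk).2.1
      have hsk : s ∈ k := hs k hk
      have htk : t ∈ k := ht k hk
      have c1 : IsCompact (k ∩ Icc s (s + r)) := isCompact_Icc.inter_left hkc
      have c2 : IsCompact (k ∩ Icc (t - r) t) := isCompact_Icc.inter_left hkc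
      obtain ⟨s', hs', hsmax⟩ := c1.exists_isGreatest ⟨s, hsk, by constructor <;> linarith⟩
      obtain ⟨t', ht', htmin⟩ := c2.exists_isLeast ⟨t, htk, by constructor <;> linarith⟩
      refine hdd s' t' ?_ ?_ ((hc hk).2.2.2.2 s' hs'.1 t' ht'.1 ?_ ?_)
      · rw [abs_lt]; constructor <;> linarith [hs'.2.1, hs'.2.2]
      · rw [abs_lt]; constructor <;> linarith [ht'.2.1, ht'.2.2]
      · linarith [hs'.2.2, ht'.2.1]
      · rintro x hx ⟨hx1, hx2⟩
        have h1 : ¬ x ≤ s + r := fun h => absurd (hsmax ⟨hx, by linarith [hs'.2.1], h⟩) (not_le.2 hx1)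
        have h2 : ¬ t - r ≤ x := fun h => absurd (htmin ⟨hx, h, by linarith [ht'.2.2]⟩) (not_le.2 hx2)
        push Not at h1 h2
        exact hke x hx ⟨h1.le, h2.le⟩) _ hS
  obtain ⟨hKS, hmin⟩ := hK
  refine ⟨K, hKS.1, hKS.2.1, hKS.2.2.1, hKS.2.2.2.1, hKS.2.2.2.2, ?_⟩
  intro s hs t ht hst he x hx hxx
  have h' : K \ Ioo s t ∈ S := by
    refine ⟨sdiff_subset.trans hKS.1, hKS.2.1.sdiff isOpen_Ioo, ⟨hKS.2.2.1, ?_⟩,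
      ⟨hKS.2.2.2.1, ?_⟩, ?_⟩
    · intro h
      linarith [(hKS.1 hs).1, h.1]
    · intro h
      linarith [(hKS.1 ht).2, h.2]
    · intro u hu v hv huv hgap
      by_cases hg : ∀ x ∈ K, ¬ (u < x ∧ x < v)
      · exact hKS.2.2.2.2 u hu.1 v hv.1 huv hg
      · push Not at hg
        obtain ⟨w, hw, hw1, hw2⟩ := hg
        have hws : w ∈ Ioo s t := by
          by_contra hcon
          exact hgap w ⟨hw, hcon⟩ ⟨hw1, hw2⟩
        have hus : u ≤ s := by
          by_contra hcon
          exact hu.2 ⟨not_le.1 hcon, by linarith [hws.2]⟩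
        have hvt : t ≤ v := by
          by_contra hcon
          exact hv.2 ⟨by linarith [hws.1], not_le.1 hcon⟩
        have hus' : u = s := by
          by_contra hcon
          exact hgap s ⟨hs, fun h => lt_irrefl _ h.1⟩ ⟨lt_of_le_of_ne hus hcon, by linarith [hws.1]⟩
        have hvt' : v = t := by
          by_contra hcon
          exact hgap t ⟨ht, fun h => lt_irrefl _ h.2⟩
            ⟨by linarith [hws.2], lt_of_le_of_ne hvt (Ne.symm hcon)⟩
        rw [hus', hvt', he]
  exact (hmin h' sdiff_subset hx).2 hxx

theorem pa_mono {X : Type*} [MetricSpace X] (γ : ℝ → X) (hγ : Continuous γ) :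
    ∃ g : ℝ → X, Continuous g ∧ g 0 = γ 0 ∧ g 1 = γ 1 ∧ (∀ x, g x ∈ γ '' Icc 0 1) ∧
      ∀ s x t, s ≤ x → x ≤ t → g s = g t → g x = g s := by
  obtain ⟨K, hK01, hKc, hK0, hK1, hgap, hinj⟩ := pa_zorn γ hγ
  have hl : ∀ x : ℝ, ∃ l, IsGreatest (K ∩ Icc 0 (max 0 x)) l := fun x =>
    (isCompact_Icc.inter_left hKc).exists_isGreatest ⟨0, hK0, by simp⟩
  choose l hl using hl
  have hlK : ∀ x, l x ∈ K := fun x => (hl x).1.1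
  have hlm : ∀ x y, x ≤ y → l x ≤ l y := by
    intro x y hxy
    exact (hl y).2 ⟨hlK x, (hl x).1.2.1, (hl x).1.2.2.trans (max_le_max le_rfl hxy)⟩
  refine ⟨fun x => γ (l x), ?_, ?_, ?_, fun x => ⟨l x, hK01 (hlK x), rfl⟩, ?_⟩
  · have huc : UniformContinuousOn γ (Icc 0 1) :=
      isCompact_Icc.uniformContinuousOn_of_continuous hγ.continuousOn
    rw [Metric.uniformContinuousOn_iff] at huc
    refine Metric.continuous_iff.2 fun t ε hε => ?_
    obtain ⟨δ, hδ, H⟩ := huc ε hε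
    have key : ∀ x y : ℝ, x ≤ y → y - x < δ → dist (γ (l x)) (γ (l y)) < ε := by
      intro x y hxy hd
      have hcl : max 0 x ≤ max 0 y := max_le_max le_rfl hxy
      have hcd : max 0 y - max 0 x < δ := by
        rcases le_total 0 x with h | h
        · rw [max_eq_right h, max_eq_right (h.trans hxy)]; exact hd
        · rw [max_eq_left h]
          rcases le_total 0 y with h' | h'
          · rw [max_eq_right h']; linarith
          · rw [max_eq_left h']; linarith
      by_cases hne : (K ∩ Icc (max 0 x) (max 0 y)).Nonempty
      · obtain ⟨r, hr, hrm⟩ := (isCompact_Icc.inter_left hKc).exists_isLeast hne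
        have e : γ (l x) = γ r := by
          have hlr : l x ≤ r := (hl x).1.2.2.trans hr.2.1
          rcases hlr.eq_or_lt with h | h
          · rw [h]
          · refine hgap _ (hlK x) _ hr.1 h ?_
            rintro z hz ⟨h1, h2⟩
            rcases le_total z (max 0 x) with h3 | h3
            · exact absurd ((hl x).2 ⟨hz, (hK01 hz).1, h3⟩) (not_le.2 h1)
            · exact absurd (hrm ⟨hz, h3, h2.le.trans hr.2.2⟩) (not_le.2 h2)
        have hly : r ≤ l y := (hl y).2 ⟨hr.1, (hK01 hr.1).1, hr.2.2⟩
        rw [e]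
        refine H _ (hK01 hr.1) _ (hK01 (hlK y)) ?_
        rw [Real.dist_eq, abs_lt]
        constructor <;> linarith [(hl y).1.2.2, hr.2.1]
      · have e : l x = l y := by
          refine le_antisymm (hlm x y hxy) ((hl x).2 ⟨hlK y, (hl y).1.2.1, ?_⟩)
          by_contra hcon
          exact hne ⟨l y, hlK y, (not_le.1 hcon).le, (hl y).1.2.2⟩
        rw [e, dist_self]
        exact hε
    refine ⟨δ, hδ, fun u hu => ?_⟩
    rw [Real.dist_eq, abs_lt] at hu
    rcases le_total u t with h | h
    · exact key u t h (by linarith)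
    · rw [dist_comm]
      exact key t u h (by linarith)
  · have : l 0 = 0 := by
      have := (hl 0).1.2
      simp only [max_self] at this
      exact le_antisymm this.2 this.1
    simp [this]
  · have : l 1 = 1 := le_antisymm (hK01 (hlK 1)).2 ((hl 1).2 ⟨hK1, by simp⟩)
    simp [this]
  · intro s x t hsx hxt he
    dsimp only at he ⊢
    have h1 := hlm _ _ hsx
    have h2 := hlm _ _ hxt
    rcases h1.eq_or_lt with h | h
    · rw [h]
    rcases h2.eq_or_lt with h' | h'
    · rw [h', he]
    exact absurd ⟨h, h'⟩ (hinj _ (hlK s) _ (hlK t) (h.trans h') he _ (hlK x))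

theorem pa_arc {X : Type*} [MetricSpace X] [CompactSpace X] (γ : ℝ → X) (hγ : Continuous γ)
    (h01 : γ 0 ≠ γ 1) : ∃ e : C(unitInterval, X), Function.Injective e ∧ e 0 = γ 0 ∧ e 1 = γ 1 ∧
      range e ⊆ γ '' Icc 0 1 := by
  obtain ⟨g, gc, g0, g1, gr, gm⟩ := pa_mono γ hγ
  let φ : ℝ → ℝ → ℝ → ℝ := fun q t x => dist (g q) (g (max q (min x t)))
  let D := Metric.diam (univ : Set X)
  have hφD : ∀ q t x, φ q t x ≤ D := fun q t x =>
    Metric.dist_le_diam_of_mem isCompact_univ.isBounded (mem_univ _) (mem_univ _)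
  have hφ0 : ∀ q t x, 0 ≤ φ q t x := fun q t x => dist_nonneg
  let u : ℝ → ℝ → ℝ := fun q t => sSup (φ q t '' Icc 0 1)
  have hbdd : ∀ q t, BddAbove (φ q t '' Icc 0 1) := fun q t =>
    ⟨D, by rintro _ ⟨x, -, rfl⟩; exact hφD _ _ _⟩
  have hne : ∀ q t, (φ q t '' Icc (0 : ℝ) 1).Nonempty := fun q t => ⟨_, 0, by simp, rfl⟩
  have hle : ∀ q t x, x ∈ Icc (0 : ℝ) 1 → φ q t x ≤ u q t := fun q t x hx =>
    le_csSup (hbdd q t) ⟨x, hx, rfl⟩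
  have huD : ∀ q t, u q t ≤ D := fun q t =>
    csSup_le (hne q t) (by rintro _ ⟨x, -, rfl⟩; exact hφD _ _ _)
  have hu0 : ∀ q t, 0 ≤ u q t := fun q t => (hφ0 q t 0).trans (hle q t 0 (by simp))
  have huc : ∀ q, Continuous (u q) := by
    intro q
    refine IsCompact.continuous_sSup isCompact_Icc ?_
    simp only [φ, Function.HasUncurry.uncurry, id]
    fun_prop
  have humono : ∀ q s t, 0 ≤ s → s ≤ t → u q s ≤ u q t := by
    intro q s t hs hst
    refine csSup_le (hne q s) ?_
    rintro _ ⟨x, hx, rfl⟩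
    have : φ q s x = φ q t (min x s) := by
      simp only [φ]
      rw [min_eq_left ((min_le_right x s).trans hst)]
    rw [this]
    exact hle _ _ _ ⟨le_min hx.1 hs, (min_le_left _ _).trans hx.2⟩
  have hueq : ∀ q s t, s ≤ t → g s = g t → u q s = u q t := by
    intro q s t hst he
    have : φ q s = φ q t := by
      funext x
      simp only [φ]
      congr 1
      rcases le_total x s with h | h
      · rw [min_eq_left h, min_eq_left (h.trans hst)]
      · rw [min_eq_right h]
        have h1 : s ≤ min x t := le_min h hst
        have h2 : min x t ≤ t := min_le_right _ _
        rcases le_total q s with h3 | h3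
        · rw [max_eq_right h3, max_eq_right (h3.trans h1)]
          exact (gm s _ t h1 h2 he).symm
        · rw [max_eq_left h3]
          rcases le_total q (min x t) with h4 | h4
          · rw [max_eq_right h4, gm s _ t h1 h2 he, gm s q t h3 (h4.trans h2) he]
          · rw [max_eq_left h4]
    simp only [u, this]
  let q := TopologicalSpace.denseSeq ℝ
  let m : ℝ → ℝ := fun t => ∑' n : ℕ, (1 / 2 : ℝ) ^ n * u (q n) t
  have hsumD : Summable fun n : ℕ => (1 / 2 : ℝ) ^ n * D := summable_geometric_two.mul_right _
  have hsum : ∀ t, Summable fun n : ℕ => (1 / 2 : ℝ) ^ n * u (q n) t := fun t =>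
    Summable.of_nonneg_of_le (fun n => mul_nonneg (by positivity) (hu0 _ _))
      (fun n => mul_le_mul_of_nonneg_left (huD _ _) (by positivity)) hsumD
  have hmc : Continuous m := by
    refine continuous_tsum (u := fun n : ℕ => (1 / 2 : ℝ) ^ n * D) (fun n => ?_) hsumD ?_
    · exact continuous_const.mul (huc _)
    · intro n t
      rw [Real.norm_of_nonneg (mul_nonneg (by positivity) (hu0 _ _))]
      exact mul_le_mul_of_nonneg_left (huD _ _) (by positivity)
  have hmmono : ∀ s t, 0 ≤ s → s ≤ t → m s ≤ m t := fun s t hs hst =>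
    (hsum s).tsum_le_tsum (fun n => mul_le_mul_of_nonneg_left (humono _ _ _ hs hst) (by positivity))
      (hsum t)
  have hmeq : ∀ s t, s ≤ t → g s = g t → m s = m t := by
    intro s t hst he
    simp only [m, hueq _ s t hst he]
  have hmlt : ∀ s t, 0 ≤ s → s ≤ t → t ≤ 1 → g s ≠ g t → m s < m t := by
    intro s t hs hst ht1 he
    have hst' : s < t := lt_of_le_of_ne hst (by rintro rfl; exact he rfl)
    have ho : IsOpen {x | g x ≠ g t} := isOpen_ne_fun gc continuous_const
    have hne2 : (Ioo s t ∩ {x | g x ≠ g t}).Nonempty := by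
      have h1 : Ioo s t ∈ 𝓝[>] s := Ioo_mem_nhdsGT hst'
      have h2 : {x | g x ≠ g t} ∈ 𝓝[>] s := mem_nhdsWithin_of_mem_nhds (ho.mem_nhds he)
      exact Filter.nonempty_of_mem (inter_mem h1 h2)
    obtain ⟨n, hn1, hn2⟩ := (TopologicalSpace.denseRange_denseSeq ℝ).exists_mem_open
      (isOpen_Ioo.inter ho) hne2
    refine Summable.tsum_lt_tsum (i := n) (fun n => mul_le_mul_of_nonneg_left
      (humono _ _ _ hs hst) (by positivity)) ?_ (hsum s) (hsum t)
    refine mul_lt_mul_of_pos_left ?_ (by positivity)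
    have h1 : u (q n) s ≤ 0 := by
      refine csSup_le (hne _ _) ?_
      rintro _ ⟨x, -, rfl⟩
      simp only [φ]
      rw [max_eq_left ((min_le_right x s).trans hn1.1.le), dist_self]
    have h2 : φ (q n) t t ≤ u (q n) t := hle _ _ _ ⟨hs.trans hst, ht1⟩
    have h3 : 0 < φ (q n) t t := by
      simp only [φ]
      rw [min_self, max_eq_right hn1.2.le]
      exact dist_pos.2 hn2
    linarith
  have hab : m 0 < m 1 := hmlt 0 1 le_rfl zero_le_one le_rfl (by rw [g0, g1]; exact h01)
  have hba : 0 < m 1 - m 0 := by linarith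
  let ψ : C(unitInterval, unitInterval) :=
    ⟨fun t => ⟨(m t - m 0) / (m 1 - m 0), by
      have h1 := hmmono 0 t le_rfl t.2.1
      have h2 := hmmono t 1 t.2.1 t.2.2
      constructor
      · exact div_nonneg (by linarith) hba.le
      · rw [div_le_one hba]; linarith⟩, by fun_prop⟩
  have hψeq : ∀ s t, ψ s = ψ t ↔ m s = m t := by
    intro s t
    rw [← Subtype.coe_inj]
    change (m s - m 0) / (m 1 - m 0) = (m t - m 0) / (m 1 - m 0) ↔ _
    rw [div_left_inj' hba.ne']
    constructor <;> intro h <;> linarith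
  have hmg : ∀ s t : unitInterval, m s = m t ↔ g s = g t := by
    have main : ∀ s t : unitInterval, (s : ℝ) ≤ t → (m s = m t ↔ g s = g t) := by
      intro s t hst
      constructor
      · intro h
        by_contra hcon
        exact absurd h (hmlt s t s.2.1 hst t.2.2 hcon).ne
      · exact hmeq s t hst
    intro s t
    rcases le_total (s : ℝ) t with h | h
    · exact main s t h
    · rw [eq_comm, main t s h, eq_comm]
  have hψ0 : ψ 0 = 0 := by
    apply Subtype.ext
    simp [ψ]
  have hψ1 : ψ 1 = 1 := by
    apply Subtype.ext
    simp [ψ, div_self hba.ne']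
  have hψs : Function.Surjective ψ := by
    intro y
    have := intermediate_value_univ (0 : unitInterval) 1 ψ.continuous
    rw [hψ0, hψ1] at this
    exact this ⟨y.2.1, y.2.2⟩
  have hψq : IsQuotientMap ψ := ψ.continuous.isClosedMap.isQuotientMap ψ.continuous hψs
  let gI : C(unitInterval, X) := ⟨fun t => g t, by fun_prop⟩
  have hfac : Function.FactorsThrough gI ψ := fun s t h => (hmg s t).1 ((hψeq s t).1 h)
  have hlift : ∀ t, hψq.lift gI hfac (ψ t) = g t := fun t =>
    DFunLike.congr_fun (hψq.lift_comp gI hfac) t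
  refine ⟨hψq.lift gI hfac, ?_, ?_, ?_, ?_⟩
  · intro x y hxy
    obtain ⟨s, rfl⟩ := hψs x
    obtain ⟨t, rfl⟩ := hψs y
    rw [hlift, hlift] at hxy
    exact (hψeq s t).2 ((hmg s t).2 hxy)
  · have := hlift 0
    rw [hψ0] at this
    rw [this, ← g0]; rfl
  · have := hlift 1
    rw [hψ1] at this
    rw [this, ← g1]; rfl
  · rintro _ ⟨x, rfl⟩
    obtain ⟨s, rfl⟩ := hψs x
    rw [hlift]
    exact gr _


def GArc {X : Type*} [TopologicalSpace X] (V A : Set X) : Prop :=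
  ∃ (α : ℝ → X) (s t : ℝ), s < t ∧ Continuous α ∧ InjOn α (Icc s t) ∧ α s ∈ V ∧ α t ∈ V ∧
    (∀ x, s < x → x < t → α x ∉ V) ∧ A = α '' Icc s t

def GG {X : Type*} [TopologicalSpace X] (V : Set X) (E : Set (Set X)) (Y : Set X) : Prop :=
  V.Finite ∧ E.Finite ∧ (∀ A ∈ E, GArc V A) ∧ (∀ A ∈ E, ∀ B ∈ E, A ≠ B → A ∩ B ⊆ V) ∧
    Y = V ∪ ⋃₀ E

def IsG {X : Type*} [TopologicalSpace X] (Y : Set X) : Prop := ∃ V E, GG V E Y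

theorem gg_sub {X : Type*} [TopologicalSpace X] {V : Set X} {E : Set (Set X)} {Y : Set X}
    (h : GG V E Y) {y : X} (hy : y ∈ Y) : ∃ V' E', V ⊆ V' ∧ y ∈ V' ∧ GG V' E' Y := by
  by_cases hyV : y ∈ V
  · exact ⟨V, E, Subset.rfl, hyV, h⟩
  obtain ⟨hV, hE, hA, hd, rfl⟩ := h
  obtain ⟨A, hAE, hyA⟩ : ∃ A ∈ E, y ∈ A := by
    rcases hy with h | h
    · exact absurd h hyV
    · exact h
  obtain ⟨α, s, t, hst, hc, hinj, hs, ht, hout, rfl⟩ := hA A hAE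
  obtain ⟨c, hcm, rfl⟩ := hyA
  have hsc : s < c := lt_of_le_of_ne hcm.1 (by rintro rfl; exact hyV hs)
  have hct : c < t := lt_of_le_of_ne hcm.2 (by rintro rfl; exact hyV ht)
  have hA1 : α '' Icc s c ⊆ α '' Icc s t := image_mono (Icc_subset_Icc_right hct.le)
  have hA2 : α '' Icc c t ⊆ α '' Icc s t := image_mono (Icc_subset_Icc_left hsc.le)
  have hold : ∀ B ∈ E, B ≠ α '' Icc s t → B ∩ α '' Icc s t ⊆ V := fun B hB hne => hd B hB _ hAE hne
  refine ⟨insert (α c) V, (E \ {α '' Icc s t}) ∪ {α '' Icc s c, α '' Icc c t}, subset_insert _ _,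
    mem_insert _ _, hV.insert _, (hE.subset sdiff_subset).union (by simp), ?_, ?_, ?_⟩
  · rintro B (⟨hB, hne⟩ | hB | hB)
    · obtain ⟨β, s', t', hst', hc', hinj', hs', ht', hout', rfl⟩ := hA B hB
      refine ⟨β, s', t', hst', hc', hinj', Or.inr hs', Or.inr ht', ?_, rfl⟩
      rintro x hx1 hx2 (h | h)
      · exact hyV (hold _ hB hne ⟨⟨x, ⟨hx1.le, hx2.le⟩, h⟩, ⟨c, hcm, rfl⟩⟩)
      · exact hout' x hx1 hx2 h
    · refine ⟨α, s, c, hsc, hc, hinj.mono (Icc_subset_Icc_right hct.le), Or.inr hs, Or.inl rfl, ?_, hB⟩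
      rintro x hx1 hx2 (h | h)
      · exact hx2.ne (hinj ⟨hx1.le, (hx2.trans hct).le⟩ hcm h)
      · exact hout x hx1 (hx2.trans hct) h
    · refine ⟨α, c, t, hct, hc, hinj.mono (Icc_subset_Icc_left hsc.le), Or.inl rfl, Or.inr ht, ?_, hB⟩
      rintro x hx1 hx2 (h | h)
      · exact hx1.ne' (hinj ⟨(hsc.trans hx1).le, hx2.le⟩ hcm h)
      · exact hout x (hsc.trans hx1) hx2 h
  · have h12 : α '' Icc s c ∩ α '' Icc c t ⊆ insert (α c) V := by
      rintro _ ⟨⟨x, hx, rfl⟩, ⟨x', hx', he⟩⟩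
      have := hinj ⟨hsc.le.trans hx'.1, hx'.2⟩ ⟨hx.1, hx.2.trans hct.le⟩ he
      subst this
      left
      rw [le_antisymm hx.2 hx'.1]
    have hnew : ∀ B ∈ ({α '' Icc s c, α '' Icc c t} : Set (Set X)), B ⊆ α '' Icc s t := by
      rintro B (rfl | rfl)
      · exact hA1
      · exact hA2
    rintro B (⟨hB, hne⟩ | hB) C (⟨hC, hne'⟩ | hC) hBC
    · exact (hd B hB C hC hBC).trans (subset_insert _ _)
    · exact ((inter_subset_inter_right _ (hnew C hC)).trans (hold B hB hne)).trans
        (subset_insert _ _)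
    · rw [inter_comm]
      exact ((inter_subset_inter_right _ (hnew B hB)).trans (hold C hC hne')).trans
        (subset_insert _ _)
    · rcases hB with rfl | rfl <;> rcases hC with rfl | rfl
      · exact absurd rfl hBC
      · exact h12
      · rw [inter_comm]; exact h12
      · exact absurd rfl hBC
  · have hun : α '' Icc s c ∪ α '' Icc c t = α '' Icc s t := by
      rw [← image_union, Icc_union_Icc_eq_Icc hsc.le hct.le]
    have e1 : ⋃₀ E = ⋃₀ (E \ {α '' Icc s t}) ∪ α '' Icc s t := by
      rw [← sUnion_singleton (α '' Icc s t), ← sUnion_union, sUnion_singleton,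
        sdiff_union_of_subset (singleton_subset_iff.2 hAE)]
    rw [sUnion_union, sUnion_pair, hun, ← e1]
    refine subset_antisymm (union_subset_union_left _ (subset_insert _ _)) ?_
    refine union_subset (insert_subset (Or.inr ⟨_, hAE, c, hcm, rfl⟩) subset_union_left)
      subset_union_right

theorem isG_add {X : Type*} [TopologicalSpace X] {Y : Set X} (h : IsG Y) {α : ℝ → X} {s t : ℝ}
    (hst : s < t) (hc : Continuous α) (hinj : InjOn α (Icc s t)) (hs : α s ∈ Y) (ht : α t ∈ Y)
    (hout : ∀ x, s < x → x < t → α x ∉ Y) : IsG (Y ∪ α '' Icc s t) := by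
  obtain ⟨V0, E0, h0⟩ := h
  obtain ⟨V1, E1, -, hs1, h1⟩ := gg_sub h0 hs
  obtain ⟨V, E, hsub, ht1, h2⟩ := gg_sub h1 ht
  have hs1 := hsub hs1
  obtain ⟨hV, hE, hA, hd, rfl⟩ := h2
  have key : ∀ A ∈ E, A ∩ α '' Icc s t ⊆ V := by
    rintro A hAE _ ⟨hx, ⟨x, hx', rfl⟩⟩
    rcases hx'.1.eq_or_lt with h | h
    · rwa [← h]
    rcases hx'.2.eq_or_lt with h' | h'
    · rwa [h']
    exact absurd (Or.inr ⟨A, hAE, hx⟩) (hout x h h')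
  refine ⟨V, insert (α '' Icc s t) E, hV, hE.insert _, ?_, ?_, ?_⟩
  · rintro A (rfl | hAE)
    · exact ⟨α, s, t, hst, hc, hinj, hs1, ht1, fun x h h' hx => hout x h h' (Or.inl hx), rfl⟩
    · exact hA A hAE
  · rintro A (rfl | hAE) B (rfl | hBE) hne
    · exact absurd rfl hne
    · rw [inter_comm]; exact key B hBE
    · exact key A hAE
    · exact hd A hAE B hBE hne
  · rw [sUnion_insert, union_assoc, union_comm (α '' Icc s t)]

theorem isG_rec {X : Type*} [MetricSpace X] {η : ℝ} (hη : 0 < η) {α : ℝ → X} (hc : Continuous α)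
    (hinj : InjOn α (Icc 0 1)) {L : Set (Set X)} (hL : L.Finite) :
    ∀ Y, IsG Y → (∀ P ∈ L, P ⊆ Y ∧ IsClosed P ∧ IsPathConnected P ∧
      ∀ x ∈ P, ∀ y ∈ P, dist x y < η) → ∀ s t, 0 ≤ s → s ≤ t → t ≤ 1 → α s ∈ Y → α t ∈ Y →
      (∀ x, s < x → x < t → α x ∈ Y → α x ∈ ⋃₀ L) →
      ∃ β : Path (α s) (α t), IsG (Y ∪ range β) ∧ range β ⊆ Y ∪ α '' Icc s t ∧
        ∀ u, ∃ x ∈ Icc (0 : ℝ) 1, dist (β u) (α x) < η := by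
  induction L, hL using Set.Finite.induction_on with
  | empty =>
    intro Y hY _ s t hs hst ht hsY htY hout
    rcases hst.eq_or_lt with rfl | hlt
    · refine ⟨Path.refl _, ?_, ?_, ?_⟩
      · rw [Path.refl_range, union_eq_left.2 (singleton_subset_iff.2 hsY)]
        exact hY
      · rw [Path.refl_range]
        exact singleton_subset_iff.2 (Or.inl hsY)
      · intro u
        exact ⟨s, ⟨hs, ht⟩, by simpa using hη⟩
    · have hmem : ∀ u : unitInterval, s + u * (t - s) ∈ Icc s t := by
        intro u
        have h1 := u.2.1
        have h2 := u.2.2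
        constructor <;> nlinarith
      let β : Path (α s) (α t) := ⟨⟨fun u => α (s + u * (t - s)), by fun_prop⟩, by simp, by simp⟩
      have hβ : ∀ u, β u = α (s + u * (t - s)) := fun u => rfl
      have hr : range β = α '' Icc s t := by
        apply subset_antisymm
        · rintro _ ⟨u, rfl⟩
          exact ⟨_, hmem u, (hβ u).symm⟩
        · rintro _ ⟨x, hx, rfl⟩
          have hts : 0 < t - s := by linarith
          refine ⟨⟨(x - s) / (t - s), div_nonneg (by linarith [hx.1]) hts.le,
            (div_le_one hts).2 (by linarith [hx.2])⟩, ?_⟩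
          rw [hβ]
          congr 1
          dsimp only
          rw [div_mul_cancel₀ _ hts.ne']
          ring
      refine ⟨β, ?_, ?_, ?_⟩
      · rw [hr]
        exact isG_add hY hlt hc (hinj.mono (Icc_subset_Icc hs ht)) hsY htY
          (fun x h1 h2 h3 => by simpa using hout x h1 h2 h3)
      · rw [hr]; exact subset_union_right
      · intro u
        refine ⟨_, Icc_subset_Icc hs ht (hmem u), ?_⟩
        rw [hβ, dist_self]
        exact hη
  | @insert P L _ _ ih =>
    intro Y hY hP s t hs hst ht hsY htY hout
    obtain ⟨hPY, hPc, hPp, hPs⟩ := hP P (mem_insert _ _)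
    have hL' : ∀ P ∈ L, P ⊆ Y ∧ IsClosed P ∧ IsPathConnected P ∧
      ∀ x ∈ P, ∀ y ∈ P, dist x y < η := fun Q hQ => hP Q (mem_insert_of_mem _ hQ)
    by_cases hne : (α ⁻¹' P ∩ Icc s t).Nonempty
    · have hcomp : IsCompact (α ⁻¹' P ∩ Icc s t) := isCompact_Icc.inter_left (hPc.preimage hc)
      obtain ⟨s1, hs1, hs1m⟩ := hcomp.exists_isLeast hne
      obtain ⟨t1, ht1, ht1m⟩ := hcomp.exists_isGreatest hne
      have hst1 : s1 ≤ t1 := hs1m ht1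
      have hs1P : α s1 ∈ P := hs1.1
      have ht1P : α t1 ∈ P := ht1.1
      obtain ⟨β1, hG1, hr1, hd1⟩ := ih Y hY hL' s s1 hs hs1.2.1 (hs1.2.2.trans ht) hsY (hPY hs1P) (by
        intro x hx1 hx2 hxY
        rcases sUnion_insert P L ▸ hout x hx1 (hx2.trans_le hs1.2.2) hxY with h | h
        · exact absurd (hs1m ⟨h, hx1.le, (hx2.trans_le hs1.2.2).le⟩) (not_le.2 hx2)
        · exact h)
      obtain ⟨β2, hG2, hr2, hd2⟩ := ih (Y ∪ range β1) hG1
        (fun Q hQ => ⟨(hL' Q hQ).1.trans subset_union_left, (hL' Q hQ).2⟩)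
        t1 t (hs.trans ht1.2.1) ht1.2.2 ht (Or.inl (hPY ht1P)) (Or.inl htY) (by
        intro x hx1 hx2 hxY
        have hxY' : α x ∈ Y := by
          rcases hxY with h | h
          · exact h
          rcases hr1 h with h | ⟨x', hx', he⟩
          · exact h
          · have := hinj ⟨hs.trans hx'.1, hx'.2.trans (hs1.2.2.trans ht)⟩
              ⟨(hs.trans ht1.2.1).trans hx1.le, hx2.le.trans ht⟩ he
            linarith [hx'.2]
        rcases sUnion_insert P L ▸ hout x (ht1.2.1.trans_lt hx1) hx2 hxY' with h | h
        · exact absurd (ht1m ⟨h, (ht1.2.1.trans_lt hx1).le, hx2.le⟩) (not_le.2 hx1)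
        · exact h)
      obtain ⟨δ, hδ⟩ := hPp.joinedIn _ hs1P _ ht1P
      have hδr : range δ ⊆ P := by rintro _ ⟨u, rfl⟩; exact hδ u
      have hrange : range ((β1.trans δ).trans β2) = (range β1 ∪ range δ) ∪ range β2 := by
        rw [Path.trans_range, Path.trans_range]
      refine ⟨(β1.trans δ).trans β2, ?_, ?_, ?_⟩
      · have : Y ∪ range ((β1.trans δ).trans β2) = (Y ∪ range β1) ∪ range β2 := by
          rw [hrange, ← union_assoc, union_comm (range β1), ← union_assoc,
            union_eq_left.2 (hδr.trans hPY)]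
        rw [this]
        exact hG2
      · have hi1 : α '' Icc s s1 ⊆ α '' Icc s t := image_mono (Icc_subset_Icc_right hs1.2.2)
        have hi2 : α '' Icc t1 t ⊆ α '' Icc s t := image_mono (Icc_subset_Icc_left ht1.2.1)
        have hr1' : range β1 ⊆ Y ∪ α '' Icc s t := hr1.trans (union_subset_union_right _ hi1)
        rw [hrange]
        refine union_subset (union_subset hr1' ((hδr.trans hPY).trans subset_union_left)) ?_
        exact hr2.trans (union_subset (union_subset subset_union_left hr1')
          (hi2.trans subset_union_right))
      · intro u
        have hu : ((β1.trans δ).trans β2) u ∈ (range β1 ∪ range δ) ∪ range β2 := by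
          rw [← hrange]; exact mem_range_self _
        rcases hu with (⟨v, hv⟩ | ⟨v, hv⟩) | ⟨v, hv⟩ <;> rw [← hv]
        · exact hd1 v
        · exact ⟨s1, ⟨hs.trans hs1.2.1, hs1.2.2.trans ht⟩, hPs _ (hδ v) _ hs1P⟩
        · exact hd2 v
    · refine ih Y hY hL' s t hs hst ht hsY htY ?_
      intro x hx1 hx2 hxY
      rcases sUnion_insert P L ▸ hout x hx1 hx2 hxY with h | h
      · exact absurd ⟨x, h, hx1.le, hx2.le⟩ hne
      · exact h

theorem isG_pieces {X : Type*} [MetricSpace X] {η : ℝ} (hη : 0 < η) {Y : Set X} (hY : IsG Y) :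
    ∃ L : Set (Set X), L.Finite ∧ (∀ P ∈ L, P ⊆ Y ∧ IsClosed P ∧ IsPathConnected P ∧
      ∀ x ∈ P, ∀ y ∈ P, dist x y < η) ∧ Y ⊆ ⋃₀ L := by
  obtain ⟨V, E, hV, hE, hA, -, rfl⟩ := hY
  have key : ∀ A, A ∈ E → ∃ L : Set (Set X), L.Finite ∧ (∀ P ∈ L, P ⊆ A ∧ IsClosed P ∧
      IsPathConnected P ∧ ∀ x ∈ P, ∀ y ∈ P, dist x y < η) ∧ A ⊆ ⋃₀ L := by
    intro A hAE
    obtain ⟨α, s, t, hst, hc, -, -, -, -, rfl⟩ := hA A hAE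
    have hr : ∀ x : ℝ, ∃ r > 0, ∀ y, dist y x ≤ r → dist (α y) (α x) < η / 2 := by
      intro x
      obtain ⟨r, hr, H⟩ := Metric.continuous_iff.1 hc x (η / 2) (half_pos hη)
      exact ⟨r / 2, half_pos hr, fun y hy => H y (by linarith)⟩
    choose r hr H using hr
    obtain ⟨T, hT, hcov⟩ := (isCompact_Icc (a := s) (b := t)).elim_nhds_subcover
      (fun x => Metric.closedBall x (r x)) (fun x _ => Metric.closedBall_mem_nhds x (hr x))
    refine ⟨(fun x => α '' (Icc s t ∩ Metric.closedBall x (r x))) '' T, T.finite_toSet.image _,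
      ?_, ?_⟩
    · rintro _ ⟨x, hx, rfl⟩
      refine ⟨image_mono inter_subset_left, ?_, ?_, ?_⟩
      · exact ((isCompact_Icc.inter_right Metric.isClosed_closedBall).image hc).isClosed
      · exact (((convex_Icc s t).inter (convex_closedBall x (r x))).isPathConnected
          ⟨x, hT x hx, Metric.mem_closedBall_self (hr x).le⟩).image hc
      · rintro _ ⟨y, hy, rfl⟩ _ ⟨z, hz, rfl⟩
        have h1 := H x y hy.2
        have h2 := H x z hz.2
        linarith [dist_triangle_right (α y) (α z) (α x)]
    · rintro _ ⟨x, hx, rfl⟩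
      obtain ⟨y, hy, hxy⟩ := mem_iUnion₂.1 (hcov hx)
      exact ⟨_, ⟨y, hy, rfl⟩, x, ⟨hx, hxy⟩, rfl⟩
  choose! L hL1 hL2 hL3 using key
  refine ⟨(fun v => {v}) '' V ∪ ⋃ A ∈ E, L A, (hV.image _).union (hE.biUnion hL1), ?_, ?_⟩
  · rintro P (⟨v, hv, rfl⟩ | h)
    · refine ⟨singleton_subset_iff.2 (Or.inl hv), isClosed_singleton, isPathConnected_singleton v, ?_⟩
      rintro x rfl y rfl
      simpa using hη
    · obtain ⟨A, hA', hP⟩ := mem_iUnion₂.1 h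
      obtain ⟨h1, h2⟩ := hL2 A hA' P hP
      exact ⟨h1.trans ((subset_sUnion_of_mem hA').trans subset_union_right), h2⟩
  · rintro x (hx | ⟨A, hA', hx⟩)
    · exact ⟨{x}, Or.inl ⟨x, hx, rfl⟩, rfl⟩
    · obtain ⟨P, hP, hxP⟩ := hL3 A hA' hx
      exact ⟨P, Or.inr (mem_iUnion₂.2 ⟨A, hA', hP⟩), hxP⟩

theorem isG_final {X : Type*} [TopologicalSpace X] {Y : Set X} (h : IsG Y) :
    IsFiniteTopGraph Y := by
  obtain ⟨V, E, hV, hE, hA, hd, rfl⟩ := h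
  have hfin : Finite E := hE
  have key : ∀ A : E, ∃ e : C(unitInterval, X), Function.Injective e ∧ (e 0 ∈ V ∧ e 1 ∈ V) ∧
      (∀ t, e t ∈ V → t = 0 ∨ t = 1) ∧ range e = A := by
    rintro ⟨A, hAE⟩
    obtain ⟨α, s, t, hst, hc, hinj, hs, ht, hout, rfl⟩ := hA A hAE
    have hts : 0 < t - s := by linarith
    have hmem : ∀ u : unitInterval, s + u * (t - s) ∈ Icc s t := by
      intro u
      have h1 := u.2.1
      have h2 := u.2.2
      constructor <;> nlinarith
    refine ⟨⟨fun u => α (s + u * (t - s)), by fun_prop⟩, ?_, by simp [hs, ht], ?_, ?_⟩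
    · intro u v huv
      have := hinj (hmem u) (hmem v) huv
      have h2 : (u : ℝ) * (t - s) = v * (t - s) := by linarith
      exact Subtype.ext (mul_right_cancel₀ hts.ne' h2)
    · intro u hu
      by_contra hcon
      push Not at hcon
      have h0 : (0 : ℝ) < u := unitInterval.pos_iff_ne_zero.2 hcon.1
      have h1 : (u : ℝ) < 1 := unitInterval.lt_one_iff_ne_one.2 hcon.2
      exact hout _ (by nlinarith) (by nlinarith) hu
    · apply subset_antisymm
      · rintro _ ⟨u, rfl⟩
        exact ⟨_, hmem u, rfl⟩
      · rintro _ ⟨x, hx, rfl⟩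
        refine ⟨⟨(x - s) / (t - s), div_nonneg (by linarith [hx.1]) hts.le,
          (div_le_one hts).2 (by linarith [hx.2])⟩, ?_⟩
        simp only [ContinuousMap.coe_mk]
        congr 1
        rw [div_mul_cancel₀ _ hts.ne']
        ring
  choose e h1 h2 h3 h4 using key
  let φ := Finite.equivFin E
  refine ⟨hV.toFinset, Nat.card E, fun i => e (φ.symm i), fun i => h1 _, fun i => by simpa using h2 _,
    fun i t => by simpa using h3 _ t, ?_, ?_⟩
  · intro i j hij x hx hx'
    rw [h4] at hx hx'
    have hne : ((φ.symm i : E) : Set X) ≠ (φ.symm j : E) := fun h =>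
      hij (φ.symm.injective (Subtype.ext h))
    simpa using hd _ (φ.symm i).2 _ (φ.symm j).2 hne ⟨hx, hx'⟩
  · rw [Finite.coe_toFinset]
    congr 1
    simp only [h4]
    rw [φ.symm.surjective.iUnion_comp (fun A : E => (A : Set X)), sUnion_eq_iUnion]

theorem isG_extend {X : Type*} [MetricSpace X] [CompactSpace X] {η : ℝ} (hη : 0 < η) {Y : Set X}
    (hY : IsG Y) {W : Set X} {p q : X} (hp : p ∈ Y) (hq : q ∈ Y) (hpq : p ≠ q)
    (hj : JoinedIn W p q) : ∃ β : Path p q, IsG (Y ∪ range β) ∧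
      ∀ u, ∃ w ∈ W, dist (β u) w < η := by
  obtain ⟨γ, hγ⟩ := hj
  obtain ⟨e, einj, e0, e1, er⟩ := pa_arc γ.extend γ.continuous_extend (by simpa using hpq)
  rw [γ.extend_zero] at e0
  rw [γ.extend_one] at e1
  obtain ⟨L, hL, hL2, hL3⟩ := isG_pieces hη hY
  let α : ℝ → X := fun x => e (projIcc 0 1 zero_le_one x)
  have hαc : Continuous α := e.continuous.comp continuous_projIcc
  have hα0 : α 0 = p := by simp only [α, projIcc_left]; exact e0
  have hα1 : α 1 = q := by simp only [α, projIcc_right]; exact e1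
  have hαi : InjOn α (Icc 0 1) := by
    intro x hx y hy hxy
    have := einj hxy
    rw [projIcc_of_mem zero_le_one hx, projIcc_of_mem zero_le_one hy] at this
    exact congrArg Subtype.val this
  obtain ⟨β, h1, -, h3⟩ := isG_rec hη hαc hαi hL Y hY hL2 0 1 le_rfl zero_le_one le_rfl
    (hα0 ▸ hp) (hα1 ▸ hq) (fun x _ _ hx => hL3 hx)
  refine ⟨β.cast hα0.symm hα1.symm, ?_, ?_⟩
  · have : range (β.cast hα0.symm hα1.symm) = range β := by rw [Path.cast_coe]
    rw [this]
    exact h1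
  · intro u
    obtain ⟨x, hx, hd⟩ := h3 u
    refine ⟨α x, ?_, hd⟩
    obtain ⟨y, hy, he⟩ := er (mem_range_self (projIcc 0 1 zero_le_one x))
    have : α x = γ.extend y := he.symm
    rw [this, γ.extend_apply hy]
    exact hγ _

theorem isG_family {X : Type*} [MetricSpace X] [CompactSpace X] {η : ℝ} (hη : 0 < η) {S : Set X}
    (hS : S.Finite) {ι : Type*} (p q : ι → X) (W : ι → Set X) (hp : ∀ e, p e ∈ S)
    (hq : ∀ e, q e ∈ S) (hpq : ∀ e, p e ≠ q e) (hj : ∀ e, JoinedIn (W e) (p e) (q e))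
    (F : Finset ι) : ∃ β : ∀ e, Path (p e) (q e),
      (∀ e ∈ F, ∀ u, ∃ w ∈ W e, dist (β e u) w < η) ∧ IsG (S ∪ ⋃ e ∈ F, range (β e)) := by
  classical
  induction F using Finset.induction_on with
  | empty =>
    refine ⟨fun e => (hj e).somePath, by simp, S, ∅, hS, finite_empty, by simp, by simp, by simp⟩
  | insert a F ha ih =>
    obtain ⟨β, h1, h2⟩ := ih
    obtain ⟨b, h3, h4⟩ := isG_extend hη h2 (Or.inl (hp a)) (Or.inl (hq a)) (hpq a) (hj a)
    have hne : ∀ e ∈ F, e ≠ a := fun e he h => ha (h ▸ he)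
    refine ⟨Function.update β a b, ?_, ?_⟩
    · intro e he
      rcases Finset.mem_insert.1 he with rfl | he
      · simpa using h4
      · rw [Function.update_of_ne (hne e he)]
        exact h1 e he
    · have : (S ∪ ⋃ e ∈ insert a F, range (Function.update β a b e)) =
          (S ∪ ⋃ e ∈ F, range (β e)) ∪ range b := by
        rw [Finset.set_biUnion_insert, Function.update_self, union_assoc, union_comm (range b)]
        congr 2
        refine iUnion₂_congr fun e he => ?_
        rw [Function.update_of_ne (hne e he)]
      rw [this]
      exact h3

theorem pn_cover {X : Type*} [MetricSpace X] [CompactSpace X] [LocallyConnectedSpace X]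
    (hdim : CovDimLE X 1) {r : ℝ} (hr : 0 < r) :
    ∃ (m : ℕ) (U : Fin m → Set X) (p : Fin m → X), (∀ i, IsOpen (U i)) ∧
      (∀ i, IsPreconnected (U i)) ∧ (∀ x, ∃ i, x ∈ U i) ∧
      (∀ i, ∀ x ∈ U i, ∀ y ∈ U i, dist x y < r) ∧ (∀ i, p i ∈ U i) ∧
      (∀ i k, k ≠ i → p i ∉ U k) ∧
      (∀ x i j k, x ∈ U i → x ∈ U j → x ∈ U k → i = j ∨ j = k ∨ i = k) := by
  classical
  obtain ⟨t, -, ht⟩ := (isCompact_univ (X := X)).elim_nhds_subcover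
    (fun x => Metric.ball x (r / 2)) (fun x _ => Metric.ball_mem_nhds x (half_pos hr))
  obtain ⟨V, hVf, hVo, hVc, hVr, hV2⟩ := hdim ((fun x => Metric.ball x (r / 2)) '' t)
    (t.finite_toSet.image _) (by rintro _ ⟨x, -, rfl⟩; exact Metric.isOpen_ball) (by
      rw [sUnion_image]
      exact univ_subset_iff.1 ht)
  let 𝒲 : Set (Set X) := {w | ∃ v ∈ V, ∃ x ∈ v, w = connectedComponentIn v x}
  have hWo : ∀ w ∈ 𝒲, IsOpen w := by
    rintro _ ⟨v, hv, x, -, rfl⟩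
    exact (hVo v hv).connectedComponentIn
  have hWc : univ ⊆ ⋃₀ 𝒲 := by
    intro x _
    obtain ⟨v, hv, hx⟩ : x ∈ ⋃₀ V := hVc ▸ mem_univ x
    exact ⟨_, ⟨v, hv, x, hx, rfl⟩, mem_connectedComponentIn hx⟩
  choose w hw hxw using fun x : X => hWc (mem_univ x)
  obtain ⟨t', -, ht'⟩ := (isCompact_univ (X := X)).elim_nhds_subcover w
    (fun x _ => (hWo _ (hw x)).mem_nhds (hxw x))
  let 𝒯 : Set (Finset (Set X)) := {T | (∀ w ∈ T, w ∈ 𝒲) ∧ ∀ x : X, ∃ w ∈ T, x ∈ w}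
  have h𝒯 : 𝒯.Nonempty := by
    refine ⟨t'.image w, fun v hv => ?_, fun x => ?_⟩
    · obtain ⟨y, -, rfl⟩ := Finset.mem_image.1 hv
      exact hw y
    · obtain ⟨y, hy, hx⟩ := mem_iUnion₂.1 (ht' (mem_univ x))
      exact ⟨w y, Finset.mem_image_of_mem _ hy, hx⟩
  obtain ⟨T, ⟨hT1, hT2⟩, hTm⟩ := (wellFounded_lt (α := Finset (Set X))).has_min 𝒯 h𝒯
  have hpriv : ∀ w ∈ T, ∃ p ∈ w, ∀ w' ∈ T, w' ≠ w → p ∉ w' := by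
    intro w hw
    by_contra hcon
    push Not at hcon
    refine hTm (T.erase w) ⟨fun w' hw' => hT1 w' (Finset.mem_of_mem_erase hw'), fun x => ?_⟩
      (Finset.erase_ssubset hw)
    obtain ⟨w', hw', hx⟩ := hT2 x
    by_cases h : w' = w
    · subst h
      obtain ⟨w2, hw2, hne, hx2⟩ := hcon x hx
      exact ⟨w2, Finset.mem_erase.2 ⟨hne, hw2⟩, hx2⟩
    · exact ⟨w', Finset.mem_erase.2 ⟨h, hw'⟩, hx⟩
  have hord : ∀ x, ∀ a ∈ T, ∀ b ∈ T, ∀ c ∈ T, x ∈ a → x ∈ b → x ∈ c → a = b ∨ b = c ∨ a = c := by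
    intro x a ha b hb c hc hxa hxb hxc
    by_contra hcon
    push Not at hcon
    have aux : ∀ w ∈ T, x ∈ w → ∃ v ∈ V, x ∈ v ∧ w = connectedComponentIn v x := by
      intro w hw hxw
      obtain ⟨v, hv, y, hy, rfl⟩ := hT1 w hw
      exact ⟨v, hv, connectedComponentIn_subset _ _ hxw, connectedComponentIn_eq hxw⟩
    obtain ⟨va, hva, hxva, ea⟩ := aux a ha hxa
    obtain ⟨vb, hvb, hxvb, eb⟩ := aux b hb hxb
    obtain ⟨vc, hvc, hxvc, ec⟩ := aux c hc hxc
    have : 2 < {v ∈ V | x ∈ v}.ncard := by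
      rw [Set.two_lt_ncard_iff (hVf.subset (sep_subset _ _))]
      refine ⟨va, vb, vc, ⟨hva, hxva⟩, ⟨hvb, hxvb⟩, ⟨hvc, hxvc⟩, ?_, ?_, ?_⟩
      · rintro rfl; exact hcon.1 (ea.trans eb.symm)
      · rintro rfl; exact hcon.2.2 (ea.trans ec.symm)
      · rintro rfl; exact hcon.2.1 (eb.trans ec.symm)
    have := hV2 x
    omega
  choose p hp1 hp2 using fun w : T => hpriv w.1 w.2
  let φ := T.equivFin
  have hinj : ∀ i j, (φ.symm i : Set X) = φ.symm j → i = j := fun i j h =>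
    φ.symm.injective (Subtype.ext h)
  refine ⟨T.card, fun i => φ.symm i, fun i => p (φ.symm i), fun i => hWo _ (hT1 _ (φ.symm i).2),
    fun i => ?_, fun x => ?_, fun i x hx y hy => ?_, fun i => hp1 _, fun i k hki => ?_,
    fun x i j k hi hj hk => ?_⟩
  · obtain ⟨v, hv, y, hy, e⟩ := hT1 _ (φ.symm i).2
    change IsPreconnected (φ.symm i : Set X)
    rw [e]
    exact isPreconnected_connectedComponentIn
  · obtain ⟨w, hw, hx⟩ := hT2 x
    exact ⟨φ ⟨w, hw⟩, by simpa using hx⟩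
  · obtain ⟨v, hv, z, hz, e⟩ := hT1 _ (φ.symm i).2
    obtain ⟨_, ⟨c, -, rfl⟩, hvc⟩ := hVr v hv
    change x ∈ (φ.symm i : Set X) at hx
    change y ∈ (φ.symm i : Set X) at hy
    rw [e] at hx hy
    have h1 : dist x c < r / 2 := hvc (connectedComponentIn_subset _ _ hx)
    have h2 : dist y c < r / 2 := hvc (connectedComponentIn_subset _ _ hy)
    linarith [dist_triangle_right x y c]
  · exact hp2 _ _ (φ.symm k).2 (fun h => hki (hinj _ _ h))
  · rcases hord x _ (φ.symm i).2 _ (φ.symm j).2 _ (φ.symm k).2 hi hj hk with h | h | h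
    · exact Or.inl (hinj _ _ h)
    · exact Or.inr (Or.inl (hinj _ _ h))
    · exact Or.inr (Or.inr (hinj _ _ h))

theorem pn_bump {X : Type*} [MetricSpace X] {U : Set X} (hU : IsOpen U) :
    ∃ ψ : X → ℝ, Continuous ψ ∧ (∀ x, 0 ≤ ψ x) ∧ ∀ x, 0 < ψ x ↔ x ∈ U := by
  by_cases h : Uᶜ.Nonempty
  · refine ⟨fun x => Metric.infDist x Uᶜ, Metric.continuous_infDist_pt _,
      fun x => Metric.infDist_nonneg, fun x => ?_⟩
    rw [← hU.isClosed_compl.notMem_iff_infDist_pos h]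
    simp
  · refine ⟨fun _ => 1, continuous_const, fun _ => zero_le_one, fun x => ?_⟩
    rw [not_nonempty_iff_eq_empty, compl_empty_iff] at h
    simp [h]

/-- A one-dimensional Peano continuum is approximated from within by finite subgraphs. -/
theorem stmt_15 {X : Type} [MetricSpace X] [CompactSpace X] [ConnectedSpace X]
    [LocallyConnectedSpace X] (hdim : CovDimLE X 1)
    (ε : ℝ) (hε : 0 < ε) :
    ∃ (Y : Set X) (f : X → X), IsFiniteTopGraph Y ∧ Continuous f ∧
      Set.range f = Y ∧ ∀ x : X, dist x (f x) < ε := by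
  classical
  obtain ⟨m, U, p, hUo, hUc, hUcov, hUs, hpU, hpriv, hord⟩ := pn_cover hdim (half_pos hε)
  choose ψ hψc hψ0 hψpos using fun i => pn_bump (hUo i)
  have hψz : ∀ i x, x ∉ U i → ψ i x = 0 := fun i x hx =>
    le_antisymm (not_lt.1 fun h => hx ((hψpos i x).1 h)) (hψ0 i x)
  let ι := {e : Fin m × Fin m // e.1 < e.2 ∧ (U e.1 ∩ U e.2).Nonempty}
  have hjoin : ∀ e : ι, JoinedIn (U e.1.1 ∪ U e.1.2) (p e.1.1) (p e.1.2) := by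
    rintro ⟨e, -, z, hz1, hz2⟩
    exact pn_joined ((hUo _).union (hUo _)) (IsPreconnected.union z hz1 hz2 (hUc _) (hUc _))
      (Or.inl (hpU _)) (Or.inr (hpU _))
  obtain ⟨β, hβW, hβG⟩ := isG_family (half_pos hε) (finite_range p) (fun e : ι => p e.1.1)
    (fun e => p e.1.2) (fun e => U e.1.1 ∪ U e.1.2) (fun e => mem_range_self _)
    (fun e => mem_range_self _)
    (fun e h => hpriv e.1.1 e.1.2 e.2.1.ne' (h ▸ hpU e.1.2)) hjoin
    Finset.univ
  let ρ : ι → X → ℝ := fun e x => ψ e.1.2 x / (ψ e.1.1 x + ψ e.1.2 x)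
  have hden : ∀ (e : ι) x, x ∈ U e.1.1 ∪ U e.1.2 → 0 < ψ e.1.1 x + ψ e.1.2 x := by
    rintro e x (h | h)
    · linarith [(hψpos _ _).2 h, hψ0 e.1.2 x]
    · linarith [(hψpos _ _).2 h, hψ0 e.1.1 x]
  have hρc : ∀ e : ι, ContinuousOn (ρ e) (U e.1.1 ∪ U e.1.2) := fun e =>
    (hψc _).continuousOn.div ((hψc _).add (hψc _)).continuousOn (fun x hx => (hden e x hx).ne')
  have hρ0 : ∀ (e : ι) x, x ∉ U e.1.2 → ρ e x = 0 := by
    intro e x h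
    simp [ρ, hψz _ _ h]
  have hρ1 : ∀ (e : ι) x, x ∈ U e.1.2 → x ∉ U e.1.1 → ρ e x = 1 := by
    intro e x h h'
    simp [ρ, hψz _ _ h', ((hψpos _ _).2 h).ne']
  let f : X → X := fun x => if h : ∃ e : ι, x ∈ U e.1.1 ∧ x ∈ U e.1.2 then
    (β h.choose).extend (ρ h.choose x) else p (hUcov x).choose
  have hf1 : ∀ (e : ι) x, x ∈ U e.1.1 → x ∈ U e.1.2 → f x = (β e).extend (ρ e x) := by
    intro e x h1 h2
    have h : ∃ e : ι, x ∈ U e.1.1 ∧ x ∈ U e.1.2 := ⟨e, h1, h2⟩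
    have he : h.choose = e := by
      have hc := h.choose_spec
      generalize h.choose = e' at hc
      have a1 := hord x _ _ _ hc.1 h1 h2
      have a2 := hord x _ _ _ hc.2 h1 h2
      have a3 := e.2.1
      have a4 := e'.2.1
      apply Subtype.ext
      apply Prod.ext
      · rw [Fin.ext_iff] at *; simp only [Fin.ext_iff, Fin.lt_def] at *; omega
      · rw [Fin.ext_iff] at *; simp only [Fin.ext_iff, Fin.lt_def] at *; omega
    simp only [f]
    rw [dif_pos h, he]
  have hf2 : ∀ i x, x ∈ U i → (∀ k, k ≠ i → x ∉ U k) → f x = p i := by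
    intro i x hi hk
    have h : ¬ ∃ e : ι, x ∈ U e.1.1 ∧ x ∈ U e.1.2 := by
      rintro ⟨e, h1, h2⟩
      have e1 : e.1.1 = i := by by_contra hcon; exact hk _ hcon h1
      have e2 : e.1.2 = i := by by_contra hcon; exact hk _ hcon h2
      exact absurd (e1.trans e2.symm) e.2.1.ne
    have h2 : (hUcov x).choose = i := by
      by_contra hcon
      exact hk _ hcon (hUcov x).choose_spec
    simp only [f]
    rw [dif_neg h, h2]
  -- pair of distinct indices sharing a point gives an edge
  have hpair : ∀ i j x, i ≠ j → x ∈ U i → x ∈ U j → ∃ e : ι, x ∈ U e.1.1 ∧ x ∈ U e.1.2 := by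
    intro i j x hij hi hj
    rcases lt_or_gt_of_ne hij with h | h
    · exact ⟨⟨(i, j), h, x, hi, hj⟩, hi, hj⟩
    · exact ⟨⟨(j, i), h, x, hj, hi⟩, hj, hi⟩
  have hcases : ∀ x, (∃ e : ι, x ∈ U e.1.1 ∧ x ∈ U e.1.2) ∨
      ∃ i, x ∈ U i ∧ ∀ k, k ≠ i → x ∉ U k := by
    intro x
    obtain ⟨i, hi⟩ := hUcov x
    by_cases h : ∃ k, k ≠ i ∧ x ∈ U k
    · obtain ⟨k, hk, hx⟩ := h
      exact Or.inl (hpair k i x hk hx hi)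
    · push Not at h
      exact Or.inr ⟨i, hi, h⟩
  have hfc : Continuous f := by
    let A : Fin m ⊕ ι → Set X := Sum.elim (fun i => {x | ∀ k, k ≠ i → x ∉ U k})
      (fun e => {x | ∀ k, k ≠ e.1.1 → k ≠ e.1.2 → x ∉ U k})
    refine (locallyFinite_of_finite A).continuous ?_ ?_ ?_
    · refine eq_univ_of_forall fun x => ?_
      rcases hcases x with ⟨e, h1, h2⟩ | ⟨i, -, hi⟩
      · refine mem_iUnion.2 ⟨Sum.inr e, fun k hk1 hk2 hx => ?_⟩
        rcases hord x _ _ _ h1 h2 hx with h | h | h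
        · exact e.2.1.ne h
        · exact hk2 h.symm
        · exact hk1 h.symm
      · exact mem_iUnion.2 ⟨Sum.inl i, hi⟩
    · rintro (i | e)
      · simp only [A, Sum.elim_inl, ofPred_forall]
        exact isClosed_iInter fun k => isClosed_iInter fun _ => (hUo k).isClosed_compl
      · simp only [A, Sum.elim_inr, ofPred_forall]
        exact isClosed_iInter fun k => isClosed_iInter fun _ => isClosed_iInter fun _ =>
          (hUo k).isClosed_compl
    · rintro (i | e)
      · refine (continuousOn_const (c := p i)).congr fun x hx => ?_
        have hx' : ∀ k, k ≠ i → x ∉ U k := hx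
        obtain ⟨j, hj⟩ := hUcov x
        have : j = i := by by_contra hcon; exact hx' j hcon hj
        subst this
        exact hf2 j x hj hx'
      · have hsub : A (Sum.inr e) ⊆ U e.1.1 ∪ U e.1.2 := by
          intro x hx
          have hx' : ∀ k, k ≠ e.1.1 → k ≠ e.1.2 → x ∉ U k := hx
          obtain ⟨j, hj⟩ := hUcov x
          by_cases h1 : j = e.1.1
          · exact Or.inl (h1 ▸ hj)
          by_cases h2 : j = e.1.2
          · exact Or.inr (h2 ▸ hj)
          exact absurd hj (hx' j h1 h2)
        have hcont : ContinuousOn (fun x => (β e).extend (ρ e x)) (A (Sum.inr e)) :=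
          (β e).continuous_extend.comp_continuousOn ((hρc e).mono hsub)
        refine hcont.congr fun x hx => ?_
        have hx' : ∀ k, k ≠ e.1.1 → k ≠ e.1.2 → x ∉ U k := hx
        by_cases h1 : x ∈ U e.1.1
        · by_cases h2 : x ∈ U e.1.2
          · exact hf1 e x h1 h2
          · dsimp only
            rw [hρ0 e x h2, Path.extend_zero]
            refine hf2 _ x h1 fun k hk => ?_
            by_cases hk2 : k = e.1.2
            · rwa [hk2]
            · exact hx' k hk hk2
        · have h2 : x ∈ U e.1.2 := (hsub hx).resolve_left h1
          dsimp only
          rw [hρ1 e x h2 h1, Path.extend_one]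
          refine hf2 _ x h2 fun k hk => ?_
          by_cases hk2 : k = e.1.1
          · rwa [hk2]
          · exact hx' k hk2 hk
  have hfp : ∀ i, f (p i) = p i := fun i => hf2 i _ (hpU i) (hpriv i)
  refine ⟨_, f, isG_final hβG, hfc, ?_, ?_⟩
  · apply subset_antisymm
    · rintro _ ⟨x, rfl⟩
      rcases hcases x with ⟨e, h1, h2⟩ | ⟨i, hi, hk⟩
      · right
        rw [hf1 e x h1 h2]
        refine mem_iUnion₂.2 ⟨e, Finset.mem_univ _, ?_⟩
        rw [← Path.extend_range]
        exact mem_range_self _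
      · left
        rw [hf2 i x hi hk]
        exact mem_range_self _
    · rintro y (⟨i, rfl⟩ | hy)
      · exact ⟨p i, hfp i⟩
      · obtain ⟨e, -, τ, rfl⟩ := mem_iUnion₂.1 hy
        obtain ⟨z, hz1, hz2⟩ := e.2.2
        have hne := e.2.1.ne
        have hβτ : β e τ = (β e).extend (τ : ℝ) := by
          rw [Path.extend_apply _ τ.2]
        rcases le_total (τ : ℝ) (ρ e z) with h | h
        · have hiv := (hUc e.1.1).intermediate_value (hpU _) hz1
            ((hρc e).mono subset_union_left)
          rw [hρ0 e _ (hpriv _ _ hne.symm)] at hiv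
          obtain ⟨x, hx, hxτ⟩ := hiv ⟨τ.2.1, h⟩
          by_cases hx2 : x ∈ U e.1.2
          · exact ⟨x, by rw [hf1 e x hx hx2, hxτ, hβτ]⟩
          · rw [hρ0 e x hx2] at hxτ
            exact ⟨p e.1.1, by rw [hfp, hβτ, ← hxτ, Path.extend_zero]⟩
        · have hiv := (hUc e.1.2).intermediate_value hz2 (hpU _)
            ((hρc e).mono subset_union_right)
          rw [hρ1 e _ (hpU _) (hpriv _ _ hne)] at hiv
          obtain ⟨x, hx, hxτ⟩ := hiv ⟨h, τ.2.2⟩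
          by_cases hx1 : x ∈ U e.1.1
          · exact ⟨x, by rw [hf1 e x hx1 hx, hxτ, hβτ]⟩
          · rw [hρ1 e x hx hx1] at hxτ
            exact ⟨p e.1.2, by rw [hfp, hβτ, ← hxτ, Path.extend_one]⟩
  · intro x
    rcases hcases x with ⟨e, h1, h2⟩ | ⟨i, hi, hk⟩
    · rw [hf1 e x h1 h2]
      obtain ⟨u, hu⟩ : (β e).extend (ρ e x) ∈ range (β e) := by
        rw [← Path.extend_range]
        exact mem_range_self _
      rw [← hu]
      obtain ⟨w, hw, hd⟩ := hβW e (Finset.mem_univ _) u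
      have hxw : dist x w < ε / 2 := by
        rcases hw with hw | hw
        · exact hUs _ x h1 w hw
        · exact hUs _ x h2 w hw
      linarith [dist_triangle_right x (β e u) w]
    · rw [hf2 i x hi hk]
      linarith [hUs i x hi _ (hpU i)]
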